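/- Fix integers p, k ≥ 1. Let c ∈ ℝ^p, let Φ₀ ∈ ℝ^{p×p} be invertible, let Φ̄₁ ∈ ℝ^{p×kp} have rank p, and let ρ be an admissible density on ℝ^p satisfying the local-maximum condition. Let c̃ ∈ ℝ^p, let Φ̃₀ ∈ ℝ^{p×p} be invertible, and let Φ̃₁ ∈ ℝ^{p×kp}. Then there exists an admissible density ρ̃ on ℝ^p such that ρ(Φ₀ξ − c − Φ̄₁ξ̄)·|det Φ₀| = ρ̃(Φ̃₀ξ − c̃ − Φ̃₁ξ̄)·|det Φ̃₀| for Lebesgue-almost every (ξ, ξ̄) ∈ ℝ^p × ℝ^{kp}, if and only if there exists an orthogonal matrix Q ∈ O(p) such that c̃ = Qc, Φ̃₀ = QΦ₀ and Φ̃₁ = QΦ̄₁. -/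

import Mathlib

open MeasureTheory Matrix

noncomputable section

/-- `E n` is Euclidean space `ℝ^n`. -/
abbrev E (n : ℕ) : Type := EuclideanSpace ℝ (Fin n)

/-- Action of a matrix on a Euclidean vector. -/
def mulVecE {m n : ℕ} (A : Matrix (Fin m) (Fin n) ℝ) (x : E n) : E m := WithLp.toLp 2 (A.mulVec x)

/-- An admissible density on `ℝ^G`: continuously differentiable, everywhere strictly positive,
integrating to one, with zero mean and identity covariance (stated componentwise). -/
def AdmissibleDensity {G : ℕ} (ρ : E G → ℝ) : Prop :=
  ContDiff ℝ 1 ρ ∧ (∀ u, 0 < ρ u) ∧ ((∫ u, ρ u) = 1) ∧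
    (∀ i, (∫ u : E G, u i * ρ u) = 0) ∧
    (∀ i j, (∫ u : E G, u i * u j * ρ u) = if i = j then 1 else 0)

/-- The local-maximum condition: `ρ` has a local maximum at some `u₀`, is twice continuously
differentiable in a neighbourhood of `u₀`, and has negative definite Hessian there. -/
def LocalMaxCondition {G : ℕ} (ρ : E G → ℝ) : Prop :=
  ∃ u₀ : E G, IsLocalMax ρ u₀ ∧ ContDiffAt ℝ 2 ρ u₀ ∧
    ∀ v : E G, v ≠ 0 → iteratedFDeriv ℝ 2 ρ u₀ ![v, v] < 0

/-!
Put `Q = Φ̃₀Φ₀⁻¹`. Both densities are continuous, so they agree everywhere, and for each fixed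
lag vector `x` the agreement says that `ρ̃` is the density of `Q u + d(x)` when `u` has
density `ρ`, where `d(x) = Q (c + Φ̄₁ x) - (c̃ + Φ̃₁ x)`. The random vector `Q u + d(x)` has
mean `d(x)` and covariance `Q Qᵀ`; since `ρ̃` is standardised, `d(x) = 0` for every `x` and
`Q Qᵀ = 1`. Conversely an orthogonal `Q` preserves the two moments, so `ρ̃ = ρ ∘ Qᵀ` works.
-/

section MulVecE

variable {l m n : ℕ}

theorem mulVecE_apply (A : Matrix (Fin m) (Fin n) ℝ) (x : E n) (i : Fin m) :
    mulVecE A x i = ∑ j, A i j * x j := rfl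

theorem mulVecE_add (A : Matrix (Fin m) (Fin n) ℝ) (x y : E n) :
    mulVecE A (x + y) = mulVecE A x + mulVecE A y :=
  map_add (toEuclideanLin A) x y

theorem mulVecE_sub (A : Matrix (Fin m) (Fin n) ℝ) (x y : E n) :
    mulVecE A (x - y) = mulVecE A x - mulVecE A y :=
  map_sub (toEuclideanLin A) x y

theorem mulVecE_zero (A : Matrix (Fin m) (Fin n) ℝ) : mulVecE A 0 = 0 :=
  map_zero (toEuclideanLin A)

theorem mulVecE_mul (A : Matrix (Fin m) (Fin n) ℝ) (B : Matrix (Fin n) (Fin l) ℝ) (x : E l) :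
    mulVecE (A * B) x = mulVecE A (mulVecE B x) := by
  simp [mulVecE]

theorem mulVecE_one (x : E n) : mulVecE 1 x = x := by
  simp [mulVecE]

theorem mulVecE_injective :
    Function.Injective (mulVecE : Matrix (Fin m) (Fin n) ℝ → E n → E m) :=
  fun _ _ h => toEuclideanLin.injective (LinearMap.ext (congrFun h))

theorem mulVecE_surjective_of_det_ne_zero {A : Matrix (Fin n) (Fin n) ℝ} (hA : A.det ≠ 0) :
    Function.Surjective (mulVecE A) := fun x =>
  ⟨mulVecE A⁻¹ x, by rw [← mulVecE_mul, mul_nonsing_inv _ hA.isUnit, mulVecE_one]⟩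

theorem contDiff_mulVecE {r : WithTop ℕ∞} (A : Matrix (Fin m) (Fin n) ℝ) :
    ContDiff ℝ r (mulVecE A) :=
  (toEuclideanLin A).toContinuousLinearMap.contDiff

@[fun_prop]
theorem continuous_mulVecE (A : Matrix (Fin m) (Fin n) ℝ) : Continuous (mulVecE A) :=
  (contDiff_mulVecE (r := 0) A).continuous

theorem mulVecE_add_eq_add_mulVecE_iff {A B : Matrix (Fin m) (Fin n) ℝ} {a b : E m} :
    (∀ x, a + mulVecE A x = b + mulVecE B x) ↔ a = b ∧ A = B := by
  refine ⟨fun h => ?_, by rintro ⟨rfl, rfl⟩ x; rfl⟩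
  have hab : a = b := by simpa only [mulVecE_zero, add_zero] using h 0
  exact ⟨hab, mulVecE_injective (funext fun x => add_left_cancel (hab ▸ h x))⟩

end MulVecE

theorem abs_det_eq_one_of_mul_transpose_eq_one {ι : Type*} [Fintype ι] [DecidableEq ι]
    {Q : Matrix ι ι ℝ} (hQ : Q * Qᵀ = 1) : |Q.det| = 1 :=
  CStarRing.norm_of_mem_unitary (det_of_mem_unitary (mem_unitaryGroup_iff.mpr hQ))

theorem integral_eq_abs_det_smul_integral_comp_add {V F : Type*}
    [NormedAddCommGroup V] [NormedSpace ℝ V] [FiniteDimensional ℝ V] [MeasurableSpace V]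
    [BorelSpace V] [NormedAddCommGroup F] [NormedSpace ℝ F] (μ : Measure V) [μ.IsAddHaarMeasure]
    (L : V →L[ℝ] V) (hL : L.det ≠ 0) (d : V) (g : V → F) :
    ∫ u, g u ∂μ = |L.det| • ∫ v, g (L v + d) ∂μ := by
  have hbij : Function.Bijective fun v => L v + d :=
    (AddGroup.addRight_bijective d).comp (LinearMap.equivOfDetNeZero (L : V →ₗ[ℝ] V) hL).bijective
  have hderiv : ∀ v ∈ Set.univ, HasFDerivWithinAt (fun v => L v + d) L Set.univ v :=
    fun v _ => (L.hasFDerivAt.add_const d).hasFDerivWithinAt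
  have h := integral_image_eq_integral_abs_det_fderiv_smul μ MeasurableSet.univ hderiv
    hbij.injective.injOn g
  rwa [Set.image_univ, hbij.surjective.range_eq, setIntegral_univ, setIntegral_univ,
    integral_smul] at h

namespace AdmissibleDensity

variable {m n : ℕ} {ρ : E n → ℝ}

theorem contDiff (h : AdmissibleDensity ρ) : ContDiff ℝ 1 ρ :=
  h.1

theorem continuous (h : AdmissibleDensity ρ) : Continuous ρ :=
  h.contDiff.continuous

theorem pos (h : AdmissibleDensity ρ) (u : E n) : 0 < ρ u :=
  h.2.1 u

theorem integral_eq_one (h : AdmissibleDensity ρ) : ∫ u, ρ u = 1 :=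
  h.2.2.1

theorem integral_apply_mul (h : AdmissibleDensity ρ) (i : Fin n) : ∫ u : E n, u i * ρ u = 0 :=
  h.2.2.2.1 i

theorem integral_apply_mul_apply_mul (h : AdmissibleDensity ρ) (i j : Fin n) :
    ∫ u : E n, u i * u j * ρ u = (1 : Matrix (Fin n) (Fin n) ℝ) i j :=
  h.2.2.2.2 i j

theorem integrable (h : AdmissibleDensity ρ) : Integrable ρ :=
  .of_integral_ne_zero (h.integral_eq_one ▸ one_ne_zero)

theorem integrable_mul_of_abs_le (h : AdmissibleDensity ρ) {f g : E n → ℝ} (hf : Continuous f)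
    (hg : Integrable fun u => g u * ρ u) (hfg : ∀ u, |f u| ≤ g u) :
    Integrable fun u => f u * ρ u := by
  refine hg.mono' (hf.mul h.continuous).aestronglyMeasurable (.of_forall fun u => ?_)
  rw [Real.norm_eq_abs, abs_mul, abs_of_pos (h.pos u)]
  exact mul_le_mul_of_nonneg_right (hfg u) (h.pos u).le

theorem integrable_sq_apply_mul (h : AdmissibleDensity ρ) (i : Fin n) :
    Integrable fun u : E n => u i ^ 2 * ρ u := by
  refine .of_integral_ne_zero ?_
  simp only [sq, h.integral_apply_mul_apply_mul, one_apply_eq, ne_eq, one_ne_zero,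
    not_false_eq_true]

theorem integrable_apply_mul (h : AdmissibleDensity ρ) (i : Fin n) :
    Integrable fun u : E n => u i * ρ u := by
  refine h.integrable_mul_of_abs_le (g := fun u => 1 + u i ^ 2) (by fun_prop) ?_ fun u => ?_
  · simp only [one_add_mul]
    exact h.integrable.add (h.integrable_sq_apply_mul i)
  · rw [← sq_abs]
    nlinarith [sq_nonneg (|u i| - 1)]

theorem integrable_apply_mul_apply_mul (h : AdmissibleDensity ρ) (i j : Fin n) :
    Integrable fun u : E n => u i * u j * ρ u := by
  refine h.integrable_mul_of_abs_le (g := fun u => u i ^ 2 + u j ^ 2) (by fun_prop) ?_ fun u => ?_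
  · simp only [add_mul]
    exact (h.integrable_sq_apply_mul i).add (h.integrable_sq_apply_mul j)
  · rw [abs_mul, ← sq_abs (u i), ← sq_abs (u j)]
    nlinarith [sq_nonneg (|u i| - |u j|)]

theorem integral_mulVecE_add_apply_mul (h : AdmissibleDensity ρ) (A : Matrix (Fin m) (Fin n) ℝ)
    (d : E m) (i : Fin m) : ∫ u, (mulVecE A u + d) i * ρ u = d i := by
  have hlin : ∀ j ∈ Finset.univ, Integrable fun u : E n => A i j * (u j * ρ u) :=
    fun j _ => (h.integrable_apply_mul j).const_mul _
  calc ∫ u, (mulVecE A u + d) i * ρ u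
      = ∫ u : E n, ((∑ j, A i j * (u j * ρ u)) + d i * ρ u) := by
        simp only [PiLp.add_apply, mulVecE_apply, add_mul, Finset.sum_mul, mul_assoc]
    _ = (∑ j, A i j * ∫ u : E n, u j * ρ u) + d i * ∫ u, ρ u := by
        rw [integral_add (integrable_finsetSum _ hlin) (h.integrable.const_mul _),
          integral_finsetSum _ hlin]
        simp only [integral_const_mul]
    _ = d i := by simp [h.integral_apply_mul, h.integral_eq_one]

theorem integral_mulVecE_apply_mul_mulVecE_apply_mul (h : AdmissibleDensity ρ)
    (A : Matrix (Fin m) (Fin n) ℝ) (i j : Fin m) :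
    ∫ u, mulVecE A u i * mulVecE A u j * ρ u = (A * Aᵀ) i j := by
  have hquad : ∀ k l, Integrable fun u : E n => A i k * A j l * (u k * u l * ρ u) :=
    fun k l => (h.integrable_apply_mul_apply_mul k l).const_mul _
  calc ∫ u, mulVecE A u i * mulVecE A u j * ρ u
      = ∫ u : E n, ∑ k, ∑ l, A i k * A j l * (u k * u l * ρ u) := by
        simp_rw [mulVecE_apply, Finset.sum_mul_sum, Finset.sum_mul, mul_mul_mul_comm (A i _),
          mul_assoc]
    _ = ∑ k, ∑ l, A i k * A j l * ∫ u : E n, u k * u l * ρ u := by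
        rw [integral_finsetSum _ fun k _ => integrable_finsetSum _ fun l _ => hquad k l]
        simp only [integral_finsetSum _ fun l _ => hquad _ l, integral_const_mul]
    _ = (A * Aᵀ) i j := by
        simp [h.integral_apply_mul_apply_mul, mul_apply, one_apply]

end AdmissibleDensity

/-- `ρ'` is the density of the random vector `Q u + d` when `u` has density `ρ`, expressed by the
change-of-variables formula (which carries this meaning only for invertible `Q`). -/
def IsAffinePushforward {n : ℕ} (Q : Matrix (Fin n) (Fin n) ℝ) (d : E n) (ρ ρ' : E n → ℝ) : Prop :=
  ∀ u, ρ u = ρ' (mulVecE Q u + d) * |Q.det|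

namespace IsAffinePushforward

variable {n : ℕ} {Q : Matrix (Fin n) (Fin n) ℝ} {d : E n} {ρ ρ' : E n → ℝ}

theorem det_ne_zero (h : IsAffinePushforward Q d ρ ρ') {u : E n} (hu : ρ u ≠ 0) :
    Q.det ≠ 0 :=
  fun hQ => hu (by rw [h u, hQ, abs_zero, mul_zero])

theorem integral_mul (h : IsAffinePushforward Q d ρ ρ') (hQ : Q.det ≠ 0) (g : E n → ℝ) :
    ∫ u, g u * ρ' u = ∫ u, g (mulVecE Q u + d) * ρ u := by
  have hdet : (toEuclideanLin Q).toContinuousLinearMap.det = Q.det := LinearMap.det_toLpLin 2 Q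
  calc ∫ u, g u * ρ' u
      = |Q.det| * ∫ u, g (mulVecE Q u + d) * ρ' (mulVecE Q u + d) := by
        rw [integral_eq_abs_det_smul_integral_comp_add volume
          (toEuclideanLin Q).toContinuousLinearMap (hdet ▸ hQ) d, hdet]
        rfl
    _ = ∫ u, g (mulVecE Q u + d) * ρ u := by
        rw [← integral_const_mul]
        exact integral_congr_ae (.of_forall fun u => by simp only [h u]; ring)

theorem translation_eq_zero (h : IsAffinePushforward Q d ρ ρ') (hρ : AdmissibleDensity ρ)
    (hρ' : AdmissibleDensity ρ') : d = 0 := by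
  have hQ : Q.det ≠ 0 := h.det_ne_zero (hρ.pos 0).ne'
  ext i
  calc d i = ∫ u, (mulVecE Q u + d) i * ρ u := (hρ.integral_mulVecE_add_apply_mul Q d i).symm
    _ = ∫ u : E n, u i * ρ' u := (h.integral_mul hQ fun u => u i).symm
    _ = 0 := hρ'.integral_apply_mul i

theorem mul_transpose_eq_one (h : IsAffinePushforward Q d ρ ρ') (hρ : AdmissibleDensity ρ)
    (hρ' : AdmissibleDensity ρ') : Q * Qᵀ = 1 := by
  obtain rfl := h.translation_eq_zero hρ hρ'
  have hQ : Q.det ≠ 0 := h.det_ne_zero (hρ.pos 0).ne'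
  ext i j
  calc (Q * Qᵀ) i j = ∫ u, mulVecE Q u i * mulVecE Q u j * ρ u :=
        (hρ.integral_mulVecE_apply_mul_mulVecE_apply_mul Q i j).symm
    _ = ∫ u : E n, u i * u j * ρ' u := by
        simpa only [add_zero] using (h.integral_mul hQ fun u => u i * u j).symm
    _ = (1 : Matrix (Fin n) (Fin n) ℝ) i j := hρ'.integral_apply_mul_apply_mul i j

end IsAffinePushforward

theorem isAffinePushforward_comp_transpose {n : ℕ} {Q : Matrix (Fin n) (Fin n) ℝ}
    (hQ : Q * Qᵀ = 1) (ρ : E n → ℝ) :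
    IsAffinePushforward Q 0 ρ (ρ ∘ mulVecE Qᵀ) := fun u => by
  rw [Function.comp_apply, add_zero, ← mulVecE_mul, mul_eq_one_comm.mp hQ, mulVecE_one,
    abs_det_eq_one_of_mul_transpose_eq_one hQ, mul_one]

theorem AdmissibleDensity.comp_transpose {n : ℕ} {Q : Matrix (Fin n) (Fin n) ℝ} {ρ : E n → ℝ}
    (hρ : AdmissibleDensity ρ) (hQ : Q * Qᵀ = 1) : AdmissibleDensity (ρ ∘ mulVecE Qᵀ) := by
  have hpush := isAffinePushforward_comp_transpose hQ ρ
  have htransfer (g : E n → ℝ) : ∫ u, g u * (ρ ∘ mulVecE Qᵀ) u = ∫ u, g (mulVecE Q u) * ρ u := by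
    simpa only [add_zero] using hpush.integral_mul (hpush.det_ne_zero (hρ.pos 0).ne') g
  refine ⟨hρ.contDiff.comp (contDiff_mulVecE _), fun u => hρ.pos _, ?_, fun i => ?_, fun i j => ?_⟩
  · simpa only [one_mul, hρ.integral_eq_one] using htransfer fun _ => 1
  · rw [htransfer fun u => u i]
    simpa only [add_zero, PiLp.zero_apply] using hρ.integral_mulVecE_add_apply_mul Q 0 i
  · rw [htransfer fun u => u i * u j, hρ.integral_mulVecE_apply_mul_mulVecE_apply_mul, hQ,
      one_apply]

/-- The conditional density of the observation `ξ` given the lags `x`, at `w = (ξ, x)`, in the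
structural vector autoregression `Φ₀ ξ = c + Φ₁ x + u` whose shock `u` has density `ρ`. -/
def svarDensity {p q : ℕ} (c : E p) (Φ₀ : Matrix (Fin p) (Fin p) ℝ)
    (Φ₁ : Matrix (Fin p) (Fin q) ℝ) (ρ : E p → ℝ) (w : E p × E q) : ℝ :=
  ρ (mulVecE Φ₀ w.1 - c - mulVecE Φ₁ w.2) * |Φ₀.det|

section Svar

variable {p q : ℕ}

theorem continuous_svarDensity (c : E p) (Φ₀ : Matrix (Fin p) (Fin p) ℝ)
    (Φ₁ : Matrix (Fin p) (Fin q) ℝ) {ρ : E p → ℝ} (hρ : Continuous ρ) :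
    Continuous (svarDensity c Φ₀ Φ₁ ρ) := by
  unfold svarDensity
  fun_prop

theorem svarDensity_eq_svarDensity_mul_iff {Φ₀ : Matrix (Fin p) (Fin p) ℝ} (hΦ₀ : Φ₀.det ≠ 0)
    (Q : Matrix (Fin p) (Fin p) ℝ) (c ct : E p) (Φ₁ Φt₁ : Matrix (Fin p) (Fin q) ℝ)
    (ρ ρt : E p → ℝ) :
    svarDensity c Φ₀ Φ₁ ρ = svarDensity ct (Q * Φ₀) Φt₁ ρt ↔
      ∀ x, IsAffinePushforward Q (mulVecE Q (c + mulVecE Φ₁ x) - (ct + mulVecE Φt₁ x)) ρ ρt := by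
  have hpointwise (ξ : E p) (x : E q) :
      svarDensity c Φ₀ Φ₁ ρ (ξ, x) = svarDensity ct (Q * Φ₀) Φt₁ ρt (ξ, x) ↔
        ρ (mulVecE Φ₀ ξ - (c + mulVecE Φ₁ x)) =
          ρt (mulVecE Q (mulVecE Φ₀ ξ - (c + mulVecE Φ₁ x)) +
            (mulVecE Q (c + mulVecE Φ₁ x) - (ct + mulVecE Φt₁ x))) * |Q.det| := by
    rw [svarDensity, svarDensity, det_mul, abs_mul, ← mul_assoc,
      mul_left_inj' (abs_ne_zero.mpr hΦ₀), mulVecE_sub, sub_add_sub_cancel, mulVecE_mul,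
      sub_sub, sub_sub]
  refine ⟨fun h x u => ?_, fun h => funext fun ⟨ξ, x⟩ => (hpointwise ξ x).mpr (h x _)⟩
  obtain ⟨ξ, hξ⟩ := mulVecE_surjective_of_det_ne_zero hΦ₀ (u + (c + mulVecE Φ₁ x))
  simpa only [hξ, add_sub_cancel_right] using (hpointwise ξ x).mp (congrFun h (ξ, x))

theorem linear_svar_identification_general (c : E p) {Φ₀ : Matrix (Fin p) (Fin p) ℝ}
    (hΦ₀ : Φ₀.det ≠ 0) (Φ₁ : Matrix (Fin p) (Fin q) ℝ) {ρ : E p → ℝ} (hρ : AdmissibleDensity ρ)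
    (ct : E p) (Φt₀ : Matrix (Fin p) (Fin p) ℝ) (Φt₁ : Matrix (Fin p) (Fin q) ℝ) :
    (∃ ρt : E p → ℝ, AdmissibleDensity ρt ∧
        svarDensity c Φ₀ Φ₁ ρ =ᵐ[volume] svarDensity ct Φt₀ Φt₁ ρt)
      ↔ ∃ Q : Matrix (Fin p) (Fin p) ℝ, Q * Qᵀ = 1 ∧
          ct = mulVecE Q c ∧ Φt₀ = Q * Φ₀ ∧ Φt₁ = Q * Φ₁ := by
  constructor
  · rintro ⟨ρt, hρt, hae⟩
    obtain ⟨Q, rfl⟩ : ∃ Q, Φt₀ = Q * Φ₀ :=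
      ⟨Φt₀ * Φ₀⁻¹, (nonsing_inv_mul_cancel_right _ _ hΦ₀.isUnit).symm⟩
    have heq := ((continuous_svarDensity c Φ₀ Φ₁ hρ.continuous).ae_eq_iff_eq volume
      (continuous_svarDensity ct (Q * Φ₀) Φt₁ hρt.continuous)).mp hae
    have hpush := (svarDensity_eq_svarDensity_mul_iff hΦ₀ Q c ct Φ₁ Φt₁ ρ ρt).mp heq
    have hsystematic : ∀ x, ct + mulVecE Φt₁ x = mulVecE Q c + mulVecE (Q * Φ₁) x := fun x => by
      rw [mulVecE_mul, ← mulVecE_add, sub_eq_zero.mp ((hpush x).translation_eq_zero hρ hρt)]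
    obtain ⟨hc, hΦ⟩ := mulVecE_add_eq_add_mulVecE_iff.mp hsystematic
    exact ⟨Q, (hpush 0).mul_transpose_eq_one hρ hρt, hc, rfl, hΦ⟩
  · rintro ⟨Q, hQ, rfl, rfl, rfl⟩
    refine ⟨ρ ∘ mulVecE Qᵀ, hρ.comp_transpose hQ, .of_eq ?_⟩
    refine (svarDensity_eq_svarDensity_mul_iff hΦ₀ Q c _ Φ₁ _ ρ _).mpr fun x => ?_
    rw [mulVecE_add, mulVecE_mul, sub_self]
    exact isAffinePushforward_comp_transpose hQ ρ

end Svar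

/-- **Identification of the linear SVAR** (Theorem 1 / `thm:linSVAR`): two parametrisations
`(c, Φ₀, Φ̄₁, ρ)` and `(c̃, Φ̃₀, Φ̃₁, ρ̃)` of the linear SVAR are observationally equivalent
for some admissible density `ρ̃` if and only if they differ by an orthogonal matrix `Q`. -/
theorem linear_svar_identification
    (p k : ℕ) (hp : 1 ≤ p) (hk : 1 ≤ k)
    (c : E p) (Φ₀ : Matrix (Fin p) (Fin p) ℝ) (hΦ₀ : Φ₀.det ≠ 0)
    (Φ₁ : Matrix (Fin p) (Fin (k * p)) ℝ) (hΦ₁ : Φ₁.rank = p)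
    (ρ : E p → ℝ) (hρ : AdmissibleDensity ρ) (hρmax : LocalMaxCondition ρ)
    (ct : E p) (Φt₀ : Matrix (Fin p) (Fin p) ℝ) (hΦt₀ : Φt₀.det ≠ 0)
    (Φt₁ : Matrix (Fin p) (Fin (k * p)) ℝ) :
    (∃ ρt : E p → ℝ, AdmissibleDensity ρt ∧
        ∀ᵐ w : E p × E (k * p),
          ρ (mulVecE Φ₀ w.1 - c - mulVecE Φ₁ w.2) * |Φ₀.det|
            = ρt (mulVecE Φt₀ w.1 - ct - mulVecE Φt₁ w.2) * |Φt₀.det|)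
      ↔ ∃ Q : Matrix (Fin p) (Fin p) ℝ, Q * Qᵀ = 1 ∧
          ct = mulVecE Q c ∧ Φt₀ = Q * Φ₀ ∧ Φt₁ = Q * Φ₁ := by
  exact linear_svar_identification_general c hΦ₀ Φ₁ hρ ct Φt₀ Φt₁
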